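/- Let d be a positive integer and let f be a zero-sum free multiset over ℤ_d. Then the cardinality of f (counting multiplicity) is at most d − 1. -/

import Mathlib

/-!
Order the multiset as a list `l`. If no nonempty block of consecutive entries sums to zero, then the
`l.length + 1` prefix sums are pairwise distinct, because the difference of two of them is the sum
of such a block. Hence `l.length + 1` is at most the order of the group.
-/

/-- A multiset over `ZMod d` is zero-sum free if no nonempty submultiset sums to `0`. -/
def ZeroSumFree {d : ℕ} (f : Multiset (ZMod d)) : Prop :=
  ∀ g : Multiset (ZMod d), g ≤ f → g ≠ 0 → g.sum ≠ 0

section AddLeftCancelMonoid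

variable {M : Type*} [AddLeftCancelMonoid M] {l : List M}

theorem sum_drop_take_eq_zero {i j : ℕ} (hij : i ≤ j) (h : (l.take i).sum = (l.take j).sum) :
    ((l.take j).drop i).sum = 0 := by
  have hsplit := (l.take j).sum_take_add_sum_drop i
  rwa [List.take_take, min_eq_left hij, h, add_eq_left] at hsplit

theorem injOn_sum_take_of_infix_sum_ne_zero (hl : ∀ t, t <:+: l → t ≠ [] → t.sum ≠ 0) :
    Set.InjOn (fun i ↦ (l.take i).sum) (Set.Iic l.length) := by
  intro i hi j hj h
  by_contra hne
  wlog hij : i < j generalizing i j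
  · exact this hj hi h.symm (Ne.symm hne) (by lia)
  have hinfix : (l.take j).drop i <:+: l :=
    (List.drop_suffix i _).isInfix.trans (List.take_prefix j l).isInfix
  have hnonempty : (l.take j).drop i ≠ [] := by
    rw [Set.mem_Iic] at hj
    simpa using ⟨hij, hij.trans_le hj⟩
  exact hl _ hinfix hnonempty (sum_drop_take_eq_zero hij.le h)

theorem length_lt_card_of_infix_sum_ne_zero [Finite M]
    (hl : ∀ t, t <:+: l → t ≠ [] → t.sum ≠ 0) : l.length < Nat.card M := by
  have hcard := Nat.card_le_card_of_injective _ (injOn_sum_take_of_infix_sum_ne_zero hl).injective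
  simpa [Nat.succ_le_iff] using hcard

end AddLeftCancelMonoid

theorem card_le_of_zeroSumFree_general {M : Type*} [AddCancelCommMonoid M] [Finite M]
    (f : Multiset M) (hf : ∀ g ≤ f, g ≠ 0 → g.sum ≠ 0) : f.card ≤ Nat.card M - 1 := by
  induction f using Quotient.inductionOn with
  | h l =>
    refine Nat.le_sub_one_of_lt (length_lt_card_of_infix_sum_ne_zero fun t ht hne ↦ ?_)
    simpa using hf t (Multiset.coe_le.mpr ht.sublist.subperm) (by simpa using hne)

/-- A zero-sum free multiset over `ℤ_d` has cardinality (with multiplicity) at most `d - 1`. -/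
theorem card_le_of_zeroSumFree (d : ℕ) (hd : 0 < d) (f : Multiset (ZMod d))
    (hf : ZeroSumFree f) :
    Multiset.card f ≤ d - 1 := by
  have : NeZero d := ⟨hd.ne'⟩
  simpa using card_le_of_zeroSumFree_general f hf
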